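/- Let Λ = [[R, M], [0, S]] be a triangular matrix ring with M cocompatible as an (R,S)-bimodule, meaning: M_S is flat, M ⊗_S E is injective for every injective S-module E, and M ⊗_S − preserves totally acyclic complexes of injective modules. Then an object X = (X₁, X₂, φ) of the monomorphism category Mon(Λ) is a Gorenstein injective object of Mon(Λ) if and only if X₁ is a Gorenstein injective R-module, X₂ is a Gorenstein injective S-module, and φ : M ⊗_S X₂ → X₁ is a monomorphism. -/

import Mathlib

open CategoryTheory CategoryTheory.Limits

universe u

variable {R S : Type u} [Ring R] [Ring S]

/-- For the upper triangular matrix ring `Λ = [[R, M], [0, S]]`, left `Λ`-modules are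
identified with triples `(X₁, X₂, φ)` where `X₁` is a left `R`-module, `X₂` is a left
`S`-module and `φ : M ⊗_S X₂ → X₁` is `R`-linear.  We model this as the comma category
of the right exact functor `T = M ⊗_S − : S-Mod ⥤ R-Mod` over the identity of `R-Mod`:
an object `X` has `X.left = X₂`, `X.right = X₁` and `X.hom = φ : T(X₂) ⟶ X₁`. -/
abbrev TriMod (T : ModuleCat.{u} S ⥤ ModuleCat.{u} R) :=
  Comma T (𝟭 (ModuleCat.{u} R))

variable (T : ModuleCat.{u} S ⥤ ModuleCat.{u} R)

/-- Membership in the monomorphism category `Mon(Λ)`: the structure map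
`φ : M ⊗_S X₂ → X₁` is a monomorphism. -/
def InMon (X : TriMod T) : Prop := Mono X.hom

/-- A short exact sequence of `Λ`-modules (equivalently, a componentwise short exact
sequence of triples); these are the admissible short exact sequences of the exact
category `Mon(Λ)` when all three terms lie in `Mon(Λ)`. -/
def TriSES {X Y Z : TriMod T} (f : X ⟶ Y) (g : Y ⟶ Z) : Prop :=
  (∃ w : f.left ≫ g.left = 0, (ShortComplex.mk f.left g.left w).ShortExact) ∧
  (∃ w : f.right ≫ g.right = 0, (ShortComplex.mk f.right g.right w).ShortExact)

/-- `X` is an injective object of the exact category `Mon(Λ)`: `X ∈ Mon(Λ)` and every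
admissible monomorphism out of `X` in `Mon(Λ)` splits. -/
def MonInjective (X : TriMod T) : Prop :=
  InMon T X ∧ ∀ {Y Z : TriMod T} (u : X ⟶ Y) (g : Y ⟶ Z), InMon T Y → InMon T Z →
    TriSES T u g → ∃ r : Y ⟶ X, u ≫ r = 𝟙 X

/-- `(E, d)` is a totally acyclic complex of injective objects in an abelian category:
all components are injective, the complex is exact, and `Hom(I, E•)` is exact for every
injective `I`. -/
def IsTotAcyclicInj {𝒞 : Type*} [Category 𝒞] [Abelian 𝒞]
    (E : ℤ → 𝒞) (d : ∀ n : ℤ, E n ⟶ E (n + 1)) : Prop :=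
  (∀ n, Injective (E n)) ∧
  (∀ n : ℤ, ∃ w : d n ≫ d (n + 1) = 0, (ShortComplex.mk (d n) (d (n + 1)) w).Exact) ∧
  (∀ (I : 𝒞), Injective I → ∀ (n : ℤ) (u : I ⟶ E (n + 1)), u ≫ d (n + 1) = 0 →
    ∃ v : I ⟶ E n, v ≫ d n = u)

/-- `X` is a Gorenstein injective object of an abelian category: `X` is the kernel
`ker(E⁰ → E¹)` of some totally acyclic complex of injectives `E•`. -/
def IsGorensteinInjective {𝒞 : Type*} [Category 𝒞] [Abelian 𝒞] (X : 𝒞) : Prop :=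
  ∃ (E : ℤ → 𝒞) (d : ∀ n : ℤ, E n ⟶ E (n + 1)), IsTotAcyclicInj E d ∧
    ∃ (ι : X ⟶ E 0) (w : ι ≫ d 0 = 0), Mono ι ∧ (ShortComplex.mk ι (d 0) w).Exact

/-- `X` is a Gorenstein injective object of the exact category `Mon(Λ)`: `X ∈ Mon(Λ)`
and `X` is the kernel (computed componentwise) of an exact complex `E•` of injective
objects of `Mon(Λ)` such that `Hom(I, E•)` is exact for every injective object `I` of
`Mon(Λ)`. -/
def MonGorensteinInjective (X : TriMod T) : Prop :=
  InMon T X ∧ ∃ (E : ℤ → TriMod T) (d : ∀ n : ℤ, E n ⟶ E (n + 1)),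
    (∀ n, MonInjective T (E n)) ∧
    (∀ n : ℤ, ∃ w : (d n).left ≫ (d (n + 1)).left = 0,
      (ShortComplex.mk (d n).left (d (n + 1)).left w).Exact) ∧
    (∀ n : ℤ, ∃ w : (d n).right ≫ (d (n + 1)).right = 0,
      (ShortComplex.mk (d n).right (d (n + 1)).right w).Exact) ∧
    (∀ (I : TriMod T), MonInjective T I → ∀ (n : ℤ) (u : I ⟶ E (n + 1)),
      (u ≫ d (n + 1)).left = 0 → (u ≫ d (n + 1)).right = 0 →
        ∃ v : I ⟶ E n, v ≫ d n = u) ∧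
    ∃ ι : X ⟶ E 0,
      (∃ w : ι.left ≫ (d 0).left = 0, Mono ι.left ∧
        (ShortComplex.mk ι.left (d 0).left w).Exact) ∧
      (∃ w : ι.right ≫ (d 0).right = 0, Mono ι.right ∧
        (ShortComplex.mk ι.right (d 0).right w).Exact)

section Helpers

variable {A : Type u} [Ring A]

lemma mc_exact_iff {X Y Z : ModuleCat.{u} A} (f : X ⟶ Y) (g : Y ⟶ Z) (w : f ≫ g = 0) :
    (ShortComplex.mk f g w).Exact ↔ ∀ y, g y = 0 → ∃ x, f x = y :=
  ShortComplex.moduleCat_exact_iff _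

lemma mc_hext {X Y : ModuleCat.{u} A} {f g : X ⟶ Y} (h : ∀ x, f x = g x) : f = g :=
  ConcreteCategory.hom_ext _ _ h

lemma mc_comp_zero {X Y Z : ModuleCat.{u} A} {f : X ⟶ Y} {g : Y ⟶ Z} (w : f ≫ g = 0) (x : X) :
    g (f x) = 0 := by
  rw [← ConcreteCategory.comp_apply, w]; rfl

lemma mc_comp_eq {X Y Y' Z : ModuleCat.{u} A} {f : X ⟶ Y} {g : Y ⟶ Z} {f' : X ⟶ Y'}
    {g' : Y' ⟶ Z} (w : f ≫ g = f' ≫ g') (x : X) : g (f x) = g' (f' x) := by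
  rw [← ConcreteCategory.comp_apply, w]; rfl

lemma mc_mono_inj {X Y : ModuleCat.{u} A} {f : X ⟶ Y} (hf : Mono f) {x : X} (h : f x = 0) :
    x = 0 :=
  (ModuleCat.mono_iff_injective f).1 hf (by rw [h, map_zero])

lemma mc_mono_of {X Y : ModuleCat.{u} A} {f : X ⟶ Y} (h : ∀ x, f x = 0 → x = 0) : Mono f :=
  (ModuleCat.mono_iff_injective f).2 ((injective_iff_map_eq_zero f.hom).2 h)

/-- Extension of a map into an injective along an arbitrary map. -/
lemma mc_ext {P Q J : ModuleCat.{u} A} (hJ : Injective J) (d : P ⟶ Q) (g : P ⟶ J)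
    (h : ∀ x, d x = 0 → g x = 0) : ∃ k : Q ⟶ J, d ≫ k = g := by
  have he : (ShortComplex.mk (kernel.ι d) d (kernel.condition d)).Exact :=
    ShortComplex.exact_of_f_is_kernel _ (kernelIsKernel d)
  have hz : kernel.ι d ≫ g = 0 := by
    ext x
    exact h _ (mc_comp_zero (kernel.condition d) x)
  exact ⟨he.descToInjective g hz, he.comp_descToInjective g hz⟩

lemma mc_inj_prod {P Q : ModuleCat.{u} A} (hP : Injective P) (hQ : Injective Q) :
    Injective (ModuleCat.of A (P × Q)) :=
  Injective.of_iso (ModuleCat.biprodIsoProd P Q) inferInstance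

/-- Maps into a product. -/
def mcPair {W P Q : ModuleCat.{u} A} (f : W ⟶ P) (g : W ⟶ Q) : W ⟶ ModuleCat.of A (P × Q) :=
  ModuleCat.ofHom (LinearMap.prod f.hom g.hom)

lemma mcPair_apply {W P Q : ModuleCat.{u} A} (f : W ⟶ P) (g : W ⟶ Q) (x : W) :
    mcPair f g x = (f x, g x) := rfl

def mcFst (P Q : ModuleCat.{u} A) : ModuleCat.of A (P × Q) ⟶ P :=
  ModuleCat.ofHom (LinearMap.fst A P Q)

def mcSnd (P Q : ModuleCat.{u} A) : ModuleCat.of A (P × Q) ⟶ Q :=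
  ModuleCat.ofHom (LinearMap.snd A P Q)

lemma mcFst_apply {P Q : ModuleCat.{u} A} (x : ModuleCat.of A (P × Q)) :
    mcFst P Q x = x.1 := rfl

lemma mcSnd_apply {P Q : ModuleCat.{u} A} (x : ModuleCat.of A (P × Q)) :
    mcSnd P Q x = x.2 := rfl

lemma tri_core {P I Q Y : ModuleCat.{u} A} (hI : Injective I) (φ : P ⟶ I) (tu : P ⟶ Q)
    (tr : Q ⟶ P) (u : I ⟶ Y) (ψ : Q ⟶ Y) (h1 : tu ≫ tr = 𝟙 P) (h2 : tu ≫ ψ = φ ≫ u)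
    (hu : Mono u) (hc : ∀ a b, u a + ψ b = 0 → ∃ c, tu c = b) :
    ∃ r : Y ⟶ I, u ≫ r = 𝟙 I ∧ ψ ≫ r = tr ≫ φ := by
  obtain ⟨k, hk⟩ := mc_ext hI (mcFst I Q ≫ u + mcSnd I Q ≫ ψ)
    (mcFst I Q + mcSnd I Q ≫ tr ≫ φ) (by
      rintro ⟨a, b⟩ hab
      change u a + ψ b = 0 at hab
      change a + φ (tr b) = 0
      obtain ⟨c, rfl⟩ := hc a b hab
      have e1 : tr (tu c) = c := by rw [← ConcreteCategory.comp_apply, h1]; rfl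
      rw [e1]
      rw [mc_comp_eq h2, ← map_add] at hab
      exact mc_mono_inj hu hab)
  refine ⟨k, ?_, ?_⟩
  · ext a
    have := ConcreteCategory.congr_hom hk ((a, 0) : ModuleCat.of A (I × Q))
    change k (u a + ψ 0) = a + φ (tr 0) at this
    simpa using this
  · ext b
    have := ConcreteCategory.congr_hom hk ((0, b) : ModuleCat.of A (I × Q))
    change k (u 0 + ψ b) = 0 + φ (tr b) at this
    simpa using this

/-- Bidirectional dependent choice along the integers. -/
lemma int_choice (B : ℤ → Type*) (Q : ∀ n, B n → Prop) (P : ∀ n, B n → B (n + 1) → Prop)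
    (b0 : B 0) (h0 : Q 0 b0)
    (hup : ∀ n b, Q n b → ∃ c, Q (n + 1) c ∧ P n b c)
    (hdown : ∀ n c, Q (n + 1) c → ∃ b, Q n b ∧ P n b c) :
    ∃ s : ∀ n, B n, s 0 = b0 ∧ ∀ n, P n (s n) (s (n + 1)) := by
  choose up hup1 hup2 using hup
  choose dn hdn1 hdn2 using hdown
  let pos : ∀ k : ℕ, {b : B (Int.ofNat k) // Q _ b} := fun k =>
    Nat.rec (motive := fun k => {b : B (Int.ofNat k) // Q _ b}) ⟨b0, h0⟩
      (fun k b => ⟨up (Int.ofNat k) b.1 b.2, hup1 (Int.ofNat k) b.1 b.2⟩) k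
  let neg : ∀ k : ℕ, {b : B (Int.negSucc k) // Q _ b} := fun k =>
    Nat.rec (motive := fun k => {b : B (Int.negSucc k) // Q _ b})
      ⟨dn (Int.negSucc 0) b0 h0, hdn1 (Int.negSucc 0) b0 h0⟩
      (fun k b => ⟨dn (Int.negSucc (k + 1)) b.1 b.2, hdn1 (Int.negSucc (k + 1)) b.1 b.2⟩) k
  let s : ∀ n, B n := fun n =>
    match n with
    | Int.ofNat k => (pos k).1
    | Int.negSucc k => (neg k).1
  refine ⟨s, rfl, fun n => ?_⟩
  match n with
  | Int.ofNat k => exact hup2 (Int.ofNat k) (pos k).1 (pos k).2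
  | Int.negSucc 0 => exact hdn2 (Int.negSucc 0) b0 h0
  | Int.negSucc (k + 1) => exact hdn2 (Int.negSucc (k + 1)) (neg k).1 (neg k).2

end Helpers

section Tri

variable {T}

lemma T_exact [T.Additive] [T.PreservesHomology] {X Y Z : ModuleCat.{u} S} {f : X ⟶ Y}
    {g : Y ⟶ Z} {w : f ≫ g = 0} (h : (ShortComplex.mk f g w).Exact) :
    ∀ y, T.map g y = 0 → ∃ x, T.map f x = y := by
  have h' := h.map T
  exact (mc_exact_iff (T.map f) (T.map g) (by rw [← T.map_comp, w, T.map_zero])).1 h'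

lemma monInjective_of [T.Additive] [T.PreservesHomology] (X : TriMod T) (hX : Mono X.hom)
    (h1 : Injective X.right) (h2 : Injective X.left) : MonInjective T X := by
  refine ⟨hX, fun {Y Z} u g hY hZ hs => ?_⟩
  obtain ⟨⟨wl, sl⟩, ⟨wr, sr⟩⟩ := hs
  have ml : Mono u.left := sl.mono_f
  let r2 : Y.left ⟶ X.left := Injective.factorThru (𝟙 X.left) u.left
  have hr2 : u.left ≫ r2 = 𝟙 _ := Injective.comp_factorThru _ _
  obtain ⟨r1, hr1, hr1'⟩ := tri_core (I := X.right) (Y := Y.right) h1 X.hom (T.map u.left)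
    (T.map r2) u.right Y.hom (by rw [← T.map_comp, hr2, T.map_id]) u.w sr.mono_f (by
      intro a b hab
      apply T_exact sl.exact
      apply mc_mono_inj hZ
      rw [mc_comp_eq g.w b]
      change g.right (Y.hom b) = 0
      have := congrArg (fun t => g.right t) hab
      simp only [map_add, map_zero] at this
      rw [mc_comp_zero wr, zero_add] at this
      exact this)
  exact ⟨⟨r2, r1, hr1'.symm⟩, CommaMorphism.ext hr2 hr1⟩

lemma monInjective_inj [T.Additive] [PreservesFiniteColimits T] [T.PreservesHomology]
    [T.PreservesMonomorphisms]
    (hinj : ∀ E : ModuleCat.{u} S, Injective E → Injective (T.obj E))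
    (X : TriMod T) (h : MonInjective T X) : Injective X.right ∧ Injective X.left := by
  obtain ⟨hX, hs⟩ := h
  let J1 : ModuleCat.{u} R := Injective.under X.right
  let i1 : X.right ⟶ J1 := Injective.ι X.right
  let J2 : ModuleCat.{u} S := Injective.under X.left
  let i2 : X.left ⟶ J2 := Injective.ι X.left
  let Z2 : ModuleCat.{u} S := cokernel i2
  let p2 : J2 ⟶ Z2 := cokernel.π i2
  have w2 : i2 ≫ p2 = 0 := cokernel.condition i2
  have e2 : (ShortComplex.mk i2 p2 w2).Exact :=
    ShortComplex.exact_of_g_is_cokernel _ (cokernelIsCokernel i2)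
  let K : ModuleCat.{u} S := Injective.under Z2
  let κ : Z2 ⟶ K := Injective.ι Z2
  let φ : T.obj X.left ⟶ X.right := X.hom
  have hφ : Mono φ := hX
  obtain ⟨e, he⟩ := mc_ext (J := J1) inferInstance (T.map i2) (φ ≫ i1) (fun x hx => by
    rw [mc_mono_inj (inferInstance : Mono (T.map i2)) hx, map_zero])
  let Z1 : ModuleCat.{u} R := cokernel i1
  let p1 : J1 ⟶ Z1 := cokernel.π i1
  have w1 : i1 ≫ p1 = 0 := cokernel.condition i1
  have e1 : (ShortComplex.mk i1 p1 w1).Exact :=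
    ShortComplex.exact_of_g_is_cokernel _ (cokernelIsCokernel i1)
  have eT : (ShortComplex.mk (T.map i2) (T.map p2)
    (by rw [← T.map_comp, w2, T.map_zero])).Exact := e2.map T
  have : Epi (ShortComplex.mk (T.map i2) (T.map p2)
    (by rw [← T.map_comp, w2, T.map_zero])).g := (inferInstance : Epi (T.map p2))
  obtain ⟨e', he'⟩ : ∃ e' : T.obj Z2 ⟶ Z1, T.map p2 ≫ e' = e ≫ p1 :=
    ⟨_, (CokernelCofork.IsColimit.desc' eT.gIsCokernel (e ≫ p1)
      (by
        change T.map i2 ≫ e ≫ p1 = 0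
        rw [← Category.assoc, he, Category.assoc, w1, comp_zero])).2⟩
  let Y : TriMod T := ⟨J2, ModuleCat.of R (J1 × T.obj K), mcPair e (T.map p2 ≫ T.map κ)⟩
  let Z : TriMod T := ⟨Z2, ModuleCat.of R (Z1 × T.obj K), mcPair e' (T.map κ)⟩
  have hY : InMon T Y := mc_mono_of (f := mcPair e (T.map p2 ≫ T.map κ)) (fun x hx => by
    rw [mcPair_apply, Prod.mk_eq_zero] at hx
    obtain ⟨ha, hb⟩ := hx
    have hb' := mc_mono_inj (inferInstance : Mono (T.map κ)) hb
    obtain ⟨y, rfl⟩ := T_exact e2 x hb'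
    rw [mc_comp_eq he y] at ha
    rw [mc_mono_inj hφ (mc_mono_inj (inferInstance : Mono i1) ha), map_zero])
  have hZ : InMon T Z := mc_mono_of (f := mcPair e' (T.map κ)) (fun x hx => by
    rw [mcPair_apply, Prod.mk_eq_zero] at hx
    exact mc_mono_inj (inferInstance : Mono (T.map κ)) hx.2)
  let v : X ⟶ Y := ⟨i2, mcPair i1 0, by
    refine mc_hext fun x => ?_
    change mcPair e (T.map p2 ≫ T.map κ) (T.map i2 x) = mcPair i1 0 (φ x)
    rw [mcPair_apply, mcPair_apply, mc_comp_eq he x, ConcreteCategory.comp_apply,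
      ← ConcreteCategory.comp_apply (T.map i2), ← T.map_comp, w2, T.map_zero]
    simp⟩
  let g : Y ⟶ Z := ⟨p2, mcPair (mcFst _ _ ≫ p1) (mcSnd _ _), by
    refine mc_hext fun x => ?_
    change mcPair e' (T.map κ) (T.map p2 x) = ((p1 (e x), T.map κ (T.map p2 x)) : Z1 × T.obj K)
    rw [mcPair_apply, mc_comp_eq he' x]⟩
  have hsurj : Function.Surjective p1 := (ModuleCat.epi_iff_surjective p1).1 inferInstance
  have wr : v.right ≫ g.right = 0 := by
    refine mc_hext fun x => ?_
    change ((p1 (i1 x), 0) : Z1 × T.obj K) = 0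
    rw [mc_comp_zero w1]; rfl
  obtain ⟨r, hr⟩ := hs v g hY hZ ⟨⟨w2, ⟨e2⟩⟩, ⟨wr, by
    have : Mono v.right := mc_mono_of (f := mcPair i1 0) (fun x hx => by
        rw [mcPair_apply, Prod.mk_eq_zero] at hx
        exact mc_mono_inj (inferInstance : Mono i1) hx.1)
    have : Epi g.right := (ModuleCat.epi_iff_surjective _).2 (by
        rintro ⟨a, b⟩
        obtain ⟨a, rfl⟩ := hsurj a
        exact ⟨((a, b) : J1 × T.obj K), rfl⟩)
    refine ⟨?_⟩
    rw [mc_exact_iff]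
    rintro ⟨a, b⟩ hab
    change ((p1 a, b) : Z1 × T.obj K) = 0 at hab
    rw [Prod.mk_eq_zero] at hab
    obtain ⟨ha, rfl⟩ := hab
    obtain ⟨x, rfl⟩ := (mc_exact_iff _ _ w1).1 e1 a ha
    exact ⟨x, rfl⟩⟩⟩
  have hl : v.left ≫ r.left = 𝟙 _ := congrArg CommaMorphism.left hr
  have hrr : v.right ≫ r.right = 𝟙 _ := congrArg CommaMorphism.right hr
  have iK : Injective (T.obj K) := hinj K inferInstance
  have iY : Injective Y.right := mc_inj_prod (P := J1) inferInstance iK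
  have iJ : Injective Y.left := (inferInstance : Injective J2)
  exact ⟨Retract.injective ⟨v.right, r.right, hrr⟩, Retract.injective ⟨v.left, r.left, hl⟩⟩

end Tri

lemma gor_forward {T : ModuleCat.{u} S ⥤ ModuleCat.{u} R} [T.Additive]
    [PreservesFiniteColimits T] [T.PreservesHomology] [T.PreservesMonomorphisms]
    (hinj : ∀ E : ModuleCat.{u} S, Injective E → Injective (T.obj E))
    (X : TriMod T) (h : MonGorensteinInjective T X) :
    IsGorensteinInjective X.right ∧ IsGorensteinInjective X.left := by
  obtain ⟨-, E, d, hE, hl, hr, hI, ι, ⟨wl, ml, el⟩, ⟨wr, mr, er⟩⟩ := h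
  constructor
  · refine ⟨fun n => (E n).right, fun n => (d n).right,
      ⟨fun n => (monInjective_inj hinj _ (hE n)).1, hr, fun I iI n u hu => ?_⟩, ι.right, wr, mr, er⟩
    let O : ModuleCat.{u} S := ModuleCat.of S PUnit
    have hO : IsZero O := ModuleCat.isZero_of_subsingleton O
    have hTO : IsZero (T.obj O) := T.map_isZero hO
    let J : TriMod T := ⟨O, I, 0⟩
    have hJ : MonInjective T J := monInjective_of J
      ⟨fun _ _ _ => hTO.eq_of_tgt _ _⟩ iI hO.injective
    obtain ⟨v, hv⟩ := hI J hJ n ⟨0, u, hTO.eq_of_src _ _⟩ (hO.eq_of_src _ _) hu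
    exact ⟨v.right, congrArg CommaMorphism.right hv⟩
  · refine ⟨fun n => (E n).left, fun n => (d n).left,
      ⟨fun n => (monInjective_inj hinj _ (hE n)).2, hl, fun I iI n u hu => ?_⟩, ι.left, wl, ml, el⟩
    let J : TriMod T := ⟨I, T.obj I, 𝟙 _⟩
    have hJ : MonInjective T J := monInjective_of J
      (inferInstanceAs (Mono (𝟙 (T.obj I)))) (hinj I iI) iI
    have key : (T.map u ≫ (E (n + 1)).hom) ≫ (d (n + 1)).right = 0 := by
      have w : T.map (d (n + 1)).left ≫ (E (n + 1 + 1)).hom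
        = (E (n + 1)).hom ≫ (d (n + 1)).right := (d (n + 1)).w
      rw [Category.assoc, ← w, ← Category.assoc, ← T.map_comp, hu, T.map_zero, zero_comp]
    obtain ⟨v, hv⟩ := hI J hJ n ⟨u, T.map u ≫ (E (n + 1)).hom, (Category.id_comp _).symm⟩ hu key
    exact ⟨v.left, congrArg CommaMorphism.left hv⟩

/-- Lifting a map of Gorenstein injectives to a map of complexes. -/
lemma lift_complex {A : Type u} [Ring A] {D F : ℤ → ModuleCat.{u} A}
    {a : ∀ n, D n ⟶ D (n + 1)} {d : ∀ n, F n ⟶ F (n + 1)}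
    (hD : IsTotAcyclicInj D a) (hF : IsTotAcyclicInj F d)
    {P X : ModuleCat.{u} A} (j : P ⟶ D 0) (hj : Mono j)
    (ej : ∀ x, a 0 x = 0 → ∃ y, j y = x) (ι : X ⟶ F 0) (wι : ι ≫ d 0 = 0) (φ : P ⟶ X) :
    ∃ f : ∀ n, D n ⟶ F n, j ≫ f 0 = φ ≫ ι ∧ ∀ n, a n ≫ f (n + 1) = f n ≫ d n := by
  obtain ⟨iD, eD, -⟩ := hD
  obtain ⟨iF, eF, hF⟩ := hF
  obtain ⟨f0, hf0⟩ := mc_ext (iF 0) j (φ ≫ ι) (fun x hx => by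
    rw [mc_mono_inj hj hx, map_zero])
  obtain ⟨f, hf, hc⟩ := int_choice (fun n => D n ⟶ F n)
    (fun n f => ∀ x, a n x = 0 → d n (f x) = 0)
    (fun n f g => a n ≫ g = f ≫ d n) f0
    (by
      intro x hx
      obtain ⟨y, rfl⟩ := ej x hx
      rw [mc_comp_eq hf0 y]
      exact mc_comp_zero wι _)
    (by
      intro n f hf
      obtain ⟨g, hg⟩ := mc_ext (iF (n + 1)) (a n) (f ≫ d n) hf
      refine ⟨g, fun x hx => ?_, hg⟩
      obtain ⟨w, e⟩ := eD n
      obtain ⟨y, rfl⟩ := (mc_exact_iff _ _ w).1 e x hx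
      rw [mc_comp_eq hg y]
      exact mc_comp_zero (eF n).1 _)
    (by
      intro n g hg
      obtain ⟨f, hf⟩ := hF (D n) (iD n) n (a n ≫ g) (by
        refine mc_hext fun x => ?_
        exact hg _ (mc_comp_zero (eD n).1 x))
      refine ⟨f, fun x hx => ?_, hf.symm⟩
      rw [mc_comp_eq hf x, hx, map_zero])
  exact ⟨f, by rw [hf, hf0], hc⟩

/-- Mon-Hom-exactness from componentwise Hom-exactness. -/
lemma hom_core {A : Type u} [Ring A] {P I C D E : ModuleCat.{u} A} (φ : P ⟶ I) (ρ : I ⟶ P)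
    (hρ : φ ≫ ρ = 𝟙 P) (d : C ⟶ D) (d' : D ⟶ E) (hd : d ≫ d' = 0)
    (hI : ∀ u : I ⟶ D, u ≫ d' = 0 → ∃ v : I ⟶ C, v ≫ d = u)
    (u : I ⟶ D) (hu : u ≫ d' = 0) (t : P ⟶ C) (ht : t ≫ d = φ ≫ u) :
    ∃ v : I ⟶ C, v ≫ d = u ∧ φ ≫ v = t := by
  obtain ⟨v, hv⟩ := hI (u - ρ ≫ t ≫ d) (by
    simp only [Preadditive.sub_comp, Category.assoc, hd, hu, comp_zero, sub_zero])
  have h3 : φ ≫ (u - ρ ≫ t ≫ d) = 0 := by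
    rw [Preadditive.comp_sub, ← Category.assoc, hρ, Category.id_comp, ht, sub_self]
  refine ⟨ρ ≫ t + (v - ρ ≫ φ ≫ v), ?_, ?_⟩
  · simp only [Preadditive.add_comp, Preadditive.sub_comp, Category.assoc, hv, h3, comp_zero]
    abel
  · simp only [Preadditive.comp_add, Preadditive.comp_sub, ← Category.assoc, hρ,
      Category.id_comp]
    abel

lemma gor_backward {T : ModuleCat.{u} S ⥤ ModuleCat.{u} R} [T.Additive]
    [PreservesFiniteColimits T] [T.PreservesHomology] [T.PreservesMonomorphisms]
    (hinj : ∀ E : ModuleCat.{u} S, Injective E → Injective (T.obj E))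
    (htot : ∀ (E : ℤ → ModuleCat.{u} S) (d : ∀ n : ℤ, E n ⟶ E (n + 1)),
      IsTotAcyclicInj E d →
        IsTotAcyclicInj (fun n => T.obj (E n)) (fun n => T.map (d n)))
    (X : TriMod T) (hX : InMon T X) (h1 : IsGorensteinInjective X.right)
    (h2 : IsGorensteinInjective X.left) : MonGorensteinInjective T X := by
  obtain ⟨F, d, hF, ι, wι, mι, eι⟩ := h1
  obtain ⟨E, a, hE, j, wj, mj, ej⟩ := h2
  have hTE := htot E a hE
  let φ : T.obj X.left ⟶ X.right := X.hom
  have hφ : Mono φ := hX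
  obtain ⟨f, hf0, hf⟩ := lift_complex hTE hF (T.map j) inferInstance (T_exact ej) ι wι φ
  obtain ⟨iF, eF, lF⟩ := hF
  obtain ⟨iE, eE, lE⟩ := hE
  have hH : ∀ n : ℤ, ∃ (H : ModuleCat.{u} R) (h : T.obj (E n) ⟶ H), Injective H ∧
      (n ≠ 0 → Mono h) ∧ (n = 0 → IsZero H) := by
    intro n
    by_cases hn : n = 0
    · have hO : IsZero (ModuleCat.of R PUnit.{u + 1}) := ModuleCat.isZero_of_subsingleton _
      exact ⟨_, 0, hO.injective, fun h => absurd hn h, fun _ => hO⟩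
    · exact ⟨T.obj (E n), 𝟙 _, hinj _ (iE n), fun _ => inferInstance, fun h => absurd h hn⟩
  choose H h iH mH zH using hH
  have aa : ∀ n x, T.map (a (n + 1)) (T.map (a n) x) = 0 := fun n x => by
    apply mc_comp_zero
    rw [← T.map_comp, (eE n).1, T.map_zero]
  let G : ℤ → ModuleCat.{u} R := fun n =>
    ModuleCat.of R (F n × ModuleCat.of R (H n × H (n + 1)))
  let ψ : ∀ n, T.obj (E n) ⟶ G n := fun n =>
    mcPair (f n) (mcPair (h n) (T.map (a n) ≫ h (n + 1)))
  have ψ_apply : ∀ n x, ψ n x = (f n x, (h n x, h (n + 1) (T.map (a n) x))) := fun n x => rfl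
  let δ : ∀ n, G n ⟶ G (n + 1) := fun n =>
    mcPair (mcFst _ _ ≫ d n) (mcPair (mcSnd _ _ ≫ mcSnd _ _) 0)
  have δ_apply : ∀ n (x : F n) (y : H n) (z : H (n + 1)),
    δ n (x, (y, z)) = (d n x, (z, (0 : H (n + 1 + 1)))) := fun n x y z => rfl
  have iG : ∀ n, Injective (G n) := fun n => mc_inj_prod (iF n) (mc_inj_prod (iH n) (iH (n + 1)))
  have mψ : ∀ n, Mono (ψ n) := fun n => mc_mono_of (fun x hx => by
    rw [ψ_apply] at hx
    have hx1 : f n x = 0 := congrArg (fun t => t.1) hx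
    have hx2 : h n x = 0 := congrArg (fun t => t.2.1) hx
    have hx3 : h (n + 1) (T.map (a n) x) = 0 := congrArg (fun t => t.2.2) hx
    by_cases hn : n = 0
    · subst hn
      have hx4 := mc_mono_inj (mH (0 + 1) (by norm_num)) hx3
      obtain ⟨y, rfl⟩ := T_exact ej x hx4
      rw [mc_comp_eq hf0 y] at hx1
      rw [mc_mono_inj hφ (mc_mono_inj mι hx1), map_zero]
    · exact mc_mono_inj (mH n hn) hx2)
  have wG : ∀ n, T.map (a n) ≫ ψ (n + 1) = ψ n ≫ δ n := fun n => by
    refine mc_hext fun x => ?_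
    change ψ (n + 1) (T.map (a n) x) = δ n (ψ n x)
    rw [ψ_apply, ψ_apply, δ_apply, mc_comp_eq (hf n) x, aa, map_zero]
  have δδ : ∀ n, δ n ≫ δ (n + 1) = 0 := fun n => by
    refine mc_hext fun t => ?_
    obtain ⟨x, y, z⟩ := t
    change δ (n + 1) (δ n (x, (y, z))) = 0
    rw [δ_apply, δ_apply, mc_comp_zero (eF n).1]
    rfl
  have lG : ∀ (I : ModuleCat.{u} R), Injective I → ∀ (n : ℤ) (u : I ⟶ G (n + 1)),
      u ≫ δ (n + 1) = 0 → ∃ v : I ⟶ G n, v ≫ δ n = u := by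
    intro I iI n u hu
    have hu' : ∀ x, d (n + 1) (u x).1 = 0 ∧ (u x).2.2 = 0 := fun x => by
      have := mc_comp_zero hu x
      exact ⟨congrArg (fun t => t.1) this, congrArg (fun t => t.2.1) this⟩
    obtain ⟨v, hv⟩ := lF I iI n (u ≫ mcFst _ _) (by
      refine mc_hext fun x => ?_
      exact (hu' x).1)
    refine ⟨mcPair v (mcPair 0 (u ≫ mcSnd _ _ ≫ mcFst _ _)), ?_⟩
    refine mc_hext fun x => ?_
    change δ n (v x, ((0 : H n), (u x).2.1)) = u x
    have hvx : d n (v x) = (u x).1 := ConcreteCategory.congr_hom hv x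
    rw [δ_apply, hvx, ← (hu' x).2]
  let EE : ℤ → TriMod T := fun n => ⟨E n, G n, ψ n⟩
  let D : ∀ n, EE n ⟶ EE (n + 1) := fun n => ⟨a n, δ n, wG n⟩
  refine ⟨hX, EE, D, fun n => monInjective_of (EE n) (mψ n) (iG n) (iE n), eE, ?_, ?_, ?_⟩
  · intro n
    refine ⟨δδ n, ?_⟩
    rw [mc_exact_iff]
    rintro ⟨x, y, z⟩ hx
    change δ (n + 1) (x, (y, z)) = 0 at hx
    rw [δ_apply] at hx
    have hx1 : d (n + 1) x = 0 := congrArg (fun t => t.1) hx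
    have hx2 : z = 0 := congrArg (fun t => t.2.1) hx
    obtain ⟨w, e⟩ := eF n
    obtain ⟨x', rfl⟩ := (mc_exact_iff _ _ w).1 e x hx1
    subst hx2
    exact ⟨(x', ((0 : H n), y)), rfl⟩
  · intro I hI n u hul hur
    obtain ⟨i1, i2⟩ := monInjective_inj hinj I hI
    obtain ⟨v2, hv2⟩ := lE I.left i2 n u.left hul
    have iT : Injective (T.obj I.left) := hinj _ i2
    let θ : T.obj I.left ⟶ I.right := I.hom
    have mθ : Mono θ := hI.1
    have uw : T.map u.left ≫ ψ (n + 1) = θ ≫ u.right := u.w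
    obtain ⟨v1, hv1, hv1'⟩ := hom_core θ (Injective.factorThru (𝟙 _) θ)
      (Injective.comp_factorThru _ _) (δ n) (δ (n + 1)) (δδ n) (lG I.right i1 n)
      u.right hur (T.map v2 ≫ ψ n) (by
        rw [Category.assoc, ← wG, ← Category.assoc, ← T.map_comp, hv2]
        exact uw)
    exact ⟨⟨v2, v1, hv1'.symm⟩, CommaMorphism.ext hv2 hv1⟩
  · have z0 := zH 0 rfl
    have s0 : Subsingleton (H 0) := ModuleCat.subsingleton_of_isZero z0
    let k : X.right ⟶ G 0 := mcPair ι 0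
    have k_apply : ∀ x, k x = (ι x, ((0 : H 0), (0 : H (0 + 1)))) := fun x => rfl
    have wk : k ≫ δ 0 = 0 := by
      refine mc_hext fun x => ?_
      change δ 0 (k x) = 0
      rw [k_apply, δ_apply, mc_comp_zero wι]
      rfl
    refine ⟨⟨j, k, ?_⟩, ⟨wj, mj, ej⟩, ⟨wk, ?_, ?_⟩⟩
    · refine mc_hext fun x => ?_
      change ψ 0 (T.map j x) = k (φ x)
      have hz : T.map (a 0) (T.map j x) = 0 := by
        apply mc_comp_zero
        rw [← T.map_comp, wj, T.map_zero]
      rw [ψ_apply, k_apply, mc_comp_eq hf0 x, hz, map_zero,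
        Subsingleton.elim (h 0 (T.map j x)) 0]
    · refine mc_mono_of (f := k) fun x hx => ?_
      rw [k_apply] at hx
      exact mc_mono_inj mι (congrArg (fun t => t.1) hx)
    · rw [mc_exact_iff]
      rintro ⟨x, y, z⟩ hx
      change δ 0 (x, (y, z)) = 0 at hx
      rw [δ_apply] at hx
      have hx1 : d 0 x = 0 := congrArg (fun t => t.1) hx
      have hx2 : z = 0 := congrArg (fun t => t.2.1) hx
      obtain ⟨x', rfl⟩ := (mc_exact_iff _ _ wι).1 eι x hx1
      subst hx2
      refine ⟨x', ?_⟩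
      change k x' = _
      rw [k_apply, Subsingleton.elim y 0]

/-- Let `Λ = [[R, M], [0, S]]` with `M` a cocompatible bimodule: `M_S` is flat
(`T = M ⊗_S −` preserves monomorphisms), `M ⊗_S E` is injective for every injective
`S`-module `E`, and `M ⊗_S −` preserves totally acyclic complexes of injectives.  Then
an object `X = (X₁, X₂, φ)` of `Mon(Λ)` is Gorenstein injective in `Mon(Λ)` if and only
if `X₁` is a Gorenstein injective `R`-module, `X₂` is a Gorenstein injective `S`-module
and `φ : M ⊗_S X₂ → X₁` is a monomorphism. -/
theorem stmt_17 [T.Additive] [PreservesFiniteColimits T]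
    (hflat : ∀ {X Y : ModuleCat.{u} S} (f : X ⟶ Y), Mono f → Mono (T.map f))
    (hinj : ∀ E : ModuleCat.{u} S, Injective E → Injective (T.obj E))
    (htot : ∀ (E : ℤ → ModuleCat.{u} S) (d : ∀ n : ℤ, E n ⟶ E (n + 1)),
      IsTotAcyclicInj E d →
        IsTotAcyclicInj (fun n => T.obj (E n)) (fun n => T.map (d n)))
    (X : TriMod T) (hX : InMon T X) :
    MonGorensteinInjective T X ↔
      (IsGorensteinInjective X.right ∧ IsGorensteinInjective X.left ∧ Mono X.hom) := by
  
  have : T.PreservesMonomorphisms := ⟨fun f hf => hflat f hf⟩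
  have : T.PreservesHomology := T.preservesHomology_of_preservesMonos_and_cokernels
  exact ⟨fun h => ⟨(gor_forward hinj X h).1, (gor_forward hinj X h).2, hX⟩,
    fun h => gor_backward hinj htot X hX h.1 h.2.1⟩
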